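/- Suppose φ ∈ C^∞(ℝ) is real-valued and a ∈ C_0^∞(ℐ) for an open interval ℐ ⊂ (−1/2,1/2). Suppose for some 0 < δ < 1/2 that λ^{−δ/2} ≤ |φ''(t)| for t ∈ ℐ, and that for 0 ≤ j ≤ N = ⌈4δ^{−1}⌉ one has |∂_t^j a(t)| ≤ C_j λ^{j/2} and |∂_t^j φ'(t)| ≤ λ^{δ/2} for t ∈ ℐ. Then |∫ e^{iλφ(t)} a(t) dt| ≤ C λ^{−1/2+2δ}, where C depends only on δ and the constants C_j, j ≤ ⌈4δ^{−1}⌉. -/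

import Mathlib

open MeasureTheory

/-! Where `|φ'| ≤ r` the integral is bounded by the length of that set, which is at most `2r/m` when
`|φ''| ≥ m`. Off it, `1/φ'` obeys symbol estimates with scale `X = λ^{1/2}`, and every integration
by parts gains a factor of order `X/(λr)`. The choice `r = λ^{-1/2+3δ/2}` makes this gain
`λ^{-3δ/2}` and balances the two regions. The whole interval has length at most `2λ^δ`, because
`|φ''| ≥ λ^{-δ/2}` and `|φ'| ≤ λ^{δ/2}` on it, so `N` integrations by parts with `Nδ ≥ 1` leave an
acceptable remainder. -/

open Set Filter Topology

section SymbolBound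

variable {𝕜 F : Type*} [NontriviallyNormedField 𝕜] [NormedAddCommGroup F] [NormedSpace 𝕜 F]

/-- Symbol estimates of order `k` at the point `t`: the function `f` oscillates there at frequency
at most `X` and has size at most `M`, so each of its first `k` derivatives costs a factor `X`. -/
structure SymbolBoundAt (X M : ℝ) (k : ℕ) (f : 𝕜 → F) (t : 𝕜) : Prop where
  contDiffAt : ContDiffAt 𝕜 k f t
  norm_iteratedDeriv_le : ∀ j ≤ k, ‖iteratedDeriv j f t‖ ≤ M * X ^ j

variable {X M A : ℝ} {k l : ℕ} {f : 𝕜 → F} {g : 𝕜 → 𝕜} {t : 𝕜}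

namespace SymbolBoundAt

lemma norm_le (hf : SymbolBoundAt X M k f t) : ‖f t‖ ≤ M := by
  simpa using hf.norm_iteratedDeriv_le 0 k.zero_le

lemma nonneg (hf : SymbolBoundAt X M k f t) : 0 ≤ M :=
  (norm_nonneg _).trans hf.norm_le

lemma of_le (hf : SymbolBoundAt X M k f t) (hlk : l ≤ k) : SymbolBoundAt X M l f t where
  contDiffAt := hf.contDiffAt.of_le (mod_cast hlk)
  norm_iteratedDeriv_le j hj := hf.norm_iteratedDeriv_le j (hj.trans hlk)

lemma mono_size (hf : SymbolBoundAt X M k f t) (hX : 0 ≤ X) (hMA : M ≤ A) :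
    SymbolBoundAt X A k f t where
  contDiffAt := hf.contDiffAt
  norm_iteratedDeriv_le j hj := (hf.norm_iteratedDeriv_le j hj).trans (by gcongr)

protected lemma deriv (hf : SymbolBoundAt X M (k + 1) f t) :
    SymbolBoundAt X (M * X) k (deriv f) t where
  contDiffAt := hf.contDiffAt.derivWithin le_rfl
  norm_iteratedDeriv_le j hj := by
    rw [← iteratedDeriv_succ', mul_assoc, ← pow_succ']
    exact hf.norm_iteratedDeriv_le (j + 1) (by lia)

protected lemma smul (hg : SymbolBoundAt X A k g t) (hf : SymbolBoundAt X M k f t) :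
    SymbolBoundAt X (2 ^ k * (A * M)) k (g • f) t where
  contDiffAt := hg.contDiffAt.smul hf.contDiffAt
  norm_iteratedDeriv_le j hj := by
    have leibniz : iteratedDeriv j (g • f) t = ∑ i ∈ Finset.range (j + 1),
        j.choose i • iteratedDeriv i g t • iteratedDeriv (j - i) f t := by
      simpa only [iteratedDerivWithin_univ] using iteratedDerivWithin_smul (mem_univ t)
        uniqueDiffOn_univ (hg.of_le hj).contDiffAt.contDiffWithinAt
        (hf.of_le hj).contDiffAt.contDiffWithinAt
    have norm_term_le (i : ℕ) (hi : i ∈ Finset.range (j + 1)) :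
        ‖j.choose i • iteratedDeriv i g t • iteratedDeriv (j - i) f t‖
          ≤ j.choose i * (A * M * X ^ j) := by
      have hij : i ≤ j := Finset.mem_range_succ_iff.mp hi
      have hgi := hg.norm_iteratedDeriv_le i (hij.trans hj)
      have hfi := hf.norm_iteratedDeriv_le (j - i) ((j.sub_le i).trans hj)
      calc ‖j.choose i • iteratedDeriv i g t • iteratedDeriv (j - i) f t‖
          ≤ j.choose i * (‖iteratedDeriv i g t‖ * ‖iteratedDeriv (j - i) f t‖) :=
            norm_nsmul_le.trans_eq (by rw [norm_smul])
        _ ≤ j.choose i * (A * X ^ i * (M * X ^ (j - i))) := by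
            gcongr
            exact (norm_nonneg _).trans hgi
        _ = j.choose i * (A * M * X ^ j) := by
            rw [mul_mul_mul_comm, ← pow_add, Nat.add_sub_cancel' hij]
    have hAMX : 0 ≤ A * M * X ^ j := by
      rw [mul_assoc]
      exact mul_nonneg hg.nonneg ((norm_nonneg _).trans (hf.norm_iteratedDeriv_le j hj))
    calc ‖iteratedDeriv j (g • f) t‖
        ≤ ∑ i ∈ Finset.range (j + 1), j.choose i * (A * M * X ^ j) :=
          leibniz ▸ norm_sum_le_of_le _ norm_term_le
      _ = 2 ^ j * (A * M * X ^ j) := by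
          rw [← Finset.sum_mul]
          congr 1
          exact_mod_cast Nat.sum_range_choose j
      _ ≤ 2 ^ k * (A * M * X ^ j) := by gcongr; norm_num
      _ = 2 ^ k * (A * M) * X ^ j := by ring

end SymbolBoundAt

lemma sum_choose_mul_factorial_mul_two_pow_le (j : ℕ) :
    ∑ i ∈ Finset.range j, j.choose i * (i.factorial * 2 ^ i) ≤ j.factorial * 2 ^ j := by
  have choose_mul_factorial_le (i : ℕ) (hi : i ∈ Finset.range j) :
      j.choose i * i.factorial ≤ j.factorial := by
    rw [← Nat.choose_mul_factorial_mul_factorial (Finset.mem_range.mp hi).le]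
    exact Nat.le_mul_of_pos_right _ (Nat.factorial_pos _)
  calc ∑ i ∈ Finset.range j, j.choose i * (i.factorial * 2 ^ i)
      ≤ ∑ i ∈ Finset.range j, j.factorial * 2 ^ i := by
        refine Finset.sum_le_sum fun i hi => ?_
        rw [← mul_assoc]
        exact Nat.mul_le_mul_right _ (choose_mul_factorial_le i hi)
    _ = j.factorial * ∑ i ∈ Finset.range j, 2 ^ i := by rw [Finset.mul_sum]
    _ ≤ j.factorial * 2 ^ j :=
        Nat.mul_le_mul_left _ (Nat.geomSum_lt le_rfl fun i hi => Finset.mem_range.mp hi).le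

lemma iteratedDeriv_inv_mul_self {j : ℕ} (hj : j ≠ 0) {h : 𝕜 → 𝕜} (hh : ContDiffAt 𝕜 j h t)
    (h0 : h t ≠ 0) :
    iteratedDeriv j h⁻¹ t * h t = -∑ i ∈ Finset.range j,
      (j.choose i : 𝕜) * iteratedDeriv i h⁻¹ t * iteratedDeriv (j - i) h t := by
  have inv_mul_eventuallyEq_one : h⁻¹ * h =ᶠ[𝓝 t] fun _ => 1 :=
    (hh.continuousAt.eventually_ne h0).mono fun x hx => inv_mul_cancel₀ hx
  have iteratedDeriv_eq_zero : iteratedDeriv j (h⁻¹ * h) t = 0 := by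
    rw [inv_mul_eventuallyEq_one.iteratedDeriv_eq, iteratedDeriv_const, if_neg hj]
  rw [iteratedDeriv_mul (hh.inv h0) hh, Finset.sum_range_succ] at iteratedDeriv_eq_zero
  simpa using eq_neg_of_add_eq_zero_right iteratedDeriv_eq_zero

namespace SymbolBoundAt

lemma norm_iteratedDeriv_inv_le {h : 𝕜 → 𝕜} (hh : SymbolBoundAt X ‖h t‖ k h t) (h0 : h t ≠ 0)
    {j : ℕ} (hj : j ≤ k) : ‖iteratedDeriv j h⁻¹ t‖ ≤ j.factorial * 2 ^ j * ‖h t‖⁻¹ * X ^ j := by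
  have hpos : 0 < ‖h t‖ := norm_pos_iff.mpr h0
  have hXj : 0 ≤ X ^ j :=
    nonneg_of_mul_nonneg_right ((norm_nonneg _).trans (hh.norm_iteratedDeriv_le j hj)) hpos
  induction j using Nat.strong_induction_on with
  | _ j ih =>
  rcases eq_or_ne j 0 with rfl | hj0
  · simp
  have hX (i : ℕ) (hi : i ≤ k) : 0 ≤ X ^ i :=
    nonneg_of_mul_nonneg_right ((norm_nonneg _).trans (hh.norm_iteratedDeriv_le i hi)) hpos
  have norm_term_le (i : ℕ) (hi : i ∈ Finset.range j) :
      ‖(j.choose i : 𝕜) * iteratedDeriv i h⁻¹ t * iteratedDeriv (j - i) h t‖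
        ≤ (j.choose i * (i.factorial * 2 ^ i) : ℕ) * X ^ j := by
    have hij : i < j := Finset.mem_range.mp hi
    have hinv := ih i hij (by lia) (hX i (by lia))
    have hder := hh.norm_iteratedDeriv_le (j - i) (by lia)
    calc ‖(j.choose i : 𝕜) * iteratedDeriv i h⁻¹ t * iteratedDeriv (j - i) h t‖
        ≤ j.choose i * (‖iteratedDeriv i h⁻¹ t‖ * ‖iteratedDeriv (j - i) h t‖) := by
          rw [mul_assoc, norm_mul, norm_mul]
          gcongr
          simpa using Nat.norm_cast_le (α := 𝕜) (j.choose i)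
      _ ≤ j.choose i * ((i.factorial * 2 ^ i * ‖h t‖⁻¹ * X ^ i) * (‖h t‖ * X ^ (j - i))) := by
          gcongr
          exact (norm_nonneg _).trans hinv
      _ = (j.choose i * (i.factorial * 2 ^ i) : ℕ) * (X ^ i * X ^ (j - i)) := by
          push_cast
          field_simp
      _ = (j.choose i * (i.factorial * 2 ^ i) : ℕ) * X ^ j := by
          rw [← pow_add, Nat.add_sub_cancel' hij.le]
  have norm_mul_le : ‖iteratedDeriv j h⁻¹ t‖ * ‖h t‖ ≤ j.factorial * 2 ^ j * X ^ j := by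
    rw [← norm_mul, iteratedDeriv_inv_mul_self hj0 (hh.of_le hj).contDiffAt h0, norm_neg]
    refine (norm_sum_le_of_le _ norm_term_le).trans ?_
    rw [← Finset.sum_mul, ← Nat.cast_sum]
    gcongr
    exact_mod_cast sum_choose_mul_factorial_mul_two_pow_le j
  calc ‖iteratedDeriv j h⁻¹ t‖ ≤ j.factorial * 2 ^ j * X ^ j / ‖h t‖ :=
        (le_div_iff₀ hpos).mpr norm_mul_le
    _ = j.factorial * 2 ^ j * ‖h t‖⁻¹ * X ^ j := by rw [div_eq_mul_inv]; ring

protected lemma inv {h : 𝕜 → 𝕜} (hh : SymbolBoundAt X ‖h t‖ k h t) (h0 : h t ≠ 0) :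
    SymbolBoundAt X (k.factorial * 2 ^ k * ‖h t‖⁻¹) k h⁻¹ t where
  contDiffAt := hh.contDiffAt.inv h0
  norm_iteratedDeriv_le j hj := by
    have hXj : 0 ≤ X ^ j := nonneg_of_mul_nonneg_right
      ((norm_nonneg _).trans (hh.norm_iteratedDeriv_le j hj)) (norm_pos_iff.mpr h0)
    refine (hh.norm_iteratedDeriv_inv_le h0 hj).trans ?_
    gcongr
    norm_num

lemma inv_of_le_norm {h : 𝕜 → 𝕜} {r : ℝ} (hX : 0 ≤ X) (hr : 0 < r) (hrh : r ≤ ‖h t‖)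
    (hh : ContDiffAt 𝕜 k h t)
    (hderiv : ∀ j ≤ k, j ≠ 0 → ‖iteratedDeriv j h t‖ ≤ r * X ^ j) :
    SymbolBoundAt X (k.factorial * 2 ^ k * r⁻¹) k h⁻¹ t := by
  have hsymbol : SymbolBoundAt X ‖h t‖ k h t := by
    refine ⟨hh, fun j hj => ?_⟩
    rcases eq_or_ne j 0 with rfl | hj0
    · simp
    · exact (hderiv j hj hj0).trans (by gcongr)
  exact (hsymbol.inv (norm_pos_iff.mp (hr.trans_le hrh))).mono_size hX (by gcongr)

end SymbolBoundAt

end SymbolBound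

section Sublevel

variable {g : ℝ → ℝ} {c d u v m r : ℝ}

lemma sub_le_of_le_abs_deriv (hm : 0 < m) (hg' : ∀ t ∈ Icc u v, m ≤ |deriv g t|)
    (hu : |g u| ≤ r) (hv : |g v| ≤ r) : v - u ≤ 2 * r / m := by
  have hdiff (t : ℝ) (ht : t ∈ Icc u v) : DifferentiableAt ℝ g t :=
    differentiableAt_of_deriv_ne_zero (abs_pos.mp (hm.trans_le (hg' t ht)))
  rcases le_or_gt v u with hvu | huv
  · have : 0 ≤ 2 * r / m := by have := (abs_nonneg _).trans hu; positivity
    linarith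
  obtain ⟨ξ, hξ, hslope⟩ := exists_deriv_eq_slope g huv
    (fun t ht => (hdiff t ht).continuousAt.continuousWithinAt)
    fun t ht => (hdiff t (Ioo_subset_Icc_self ht)).differentiableWithinAt
  have hlen : 0 < v - u := sub_pos.mpr huv
  have hmξ := hg' ξ (Ioo_subset_Icc_self hξ)
  rw [hslope, abs_div, abs_of_pos hlen, le_div_iff₀ hlen] at hmξ
  rw [le_div_iff₀' hm]
  calc m * (v - u) ≤ |g v - g u| := hmξ
    _ ≤ |g v| + |g u| := abs_sub _ _
    _ ≤ 2 * r := by linarith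

lemma le_abs_on_closure {s : Set ℝ} (hg : ContinuousOn g (closure s))
    (h : ∀ t ∈ s, r ≤ |g t|) : ∀ t ∈ closure s, r ≤ |g t| := fun t ht =>
  continuousWithinAt_const.closure_le ht ((hg t ht).mono subset_closure).abs h

lemma exists_Icc_abs_le_of_continuousOn (hcd : c ≤ d) (hg : ContinuousOn g (Icc c d)) :
    ∃ u v, c ≤ u ∧ u ≤ v ∧ v ≤ d ∧ (u ≠ v → |g u| ≤ r ∧ |g v| ≤ r) ∧
      (c ≠ u → ∀ t ∈ Icc c u, r ≤ |g t|) ∧ (v ≠ d → ∀ t ∈ Icc v d, r ≤ |g t|) := by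
  set K : Set ℝ := {t ∈ Icc c d | |g t| ≤ r}
  have compact_K : IsCompact K :=
    isCompact_Icc.of_isClosed_subset (isClosed_Icc.isClosed_le hg.abs continuousOn_const)
      (sep_subset _ _)
  have le_abs_of_notMem (t : ℝ) (ht : t ∈ Icc c d) (htK : t ∉ K) : r ≤ |g t| :=
    le_of_not_ge fun h => htK ⟨ht, h⟩
  rcases K.eq_empty_or_nonempty with hempty | hnonempty
  · exact ⟨d, d, hcd, le_rfl, le_rfl, by simp,
      fun _ t ht => le_abs_of_notMem t ht (hempty ▸ notMem_empty t), by simp⟩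
  obtain ⟨u, huK, hu⟩ := compact_K.exists_isLeast hnonempty
  obtain ⟨v, hvK, hv⟩ := compact_K.exists_isGreatest hnonempty
  refine ⟨u, v, huK.1.1, hu hvK, hvK.1.2, fun _ => ⟨huK.2, hvK.2⟩, fun hcu => ?_, fun hvd => ?_⟩
  · rw [← closure_Ico hcu]
    refine le_abs_on_closure (hg.mono ?_) fun t ht =>
      le_abs_of_notMem t ⟨ht.1, ht.2.le.trans huK.1.2⟩ fun htK => ht.2.not_ge (hu htK)
    rw [closure_Ico hcu]
    exact Icc_subset_Icc_right huK.1.2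
  · rw [← closure_Ioc hvd]
    refine le_abs_on_closure (hg.mono ?_) fun t ht =>
      le_abs_of_notMem t ⟨hvK.1.1.trans ht.1.le, ht.2⟩ fun htK => ht.1.not_ge (hv htK)
    rw [closure_Ioc hvd]
    exact Icc_subset_Icc_left hvK.1.1

lemma norm_integral_le_of_le_abs_deriv {E : Type*} [NormedAddCommGroup E] [NormedSpace ℝ E]
    {F : ℝ → E} {M R : ℝ} (hcd : c ≤ d) (hm : 0 < m) (hr : 0 ≤ r) (hR : 0 ≤ R)
    (hF : ContinuousOn F (Icc c d)) (hg' : ∀ t ∈ Icc c d, m ≤ |deriv g t|)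
    (hM : ∀ t ∈ Icc c d, ‖F t‖ ≤ M)
    (hfar : ∀ x y, c ≤ x → x ≤ y → y ≤ d → (∀ t ∈ Icc x y, r ≤ |g t|) →
      ‖∫ t in x..y, F t‖ ≤ R) :
    ‖∫ t in c..d, F t‖ ≤ M * (2 * r / m) + 2 * R := by
  have hM0 : 0 ≤ M := (norm_nonneg _).trans (hM c (left_mem_Icc.mpr hcd))
  obtain ⟨u, v, hcu, huv, hvd, hnear, hleft, hright⟩ :=
    exists_Icc_abs_le_of_continuousOn (r := r) (g := g) hcd fun t ht =>
      (differentiableAt_of_deriv_ne_zero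
        (abs_pos.mp (hm.trans_le (hg' t ht)))).continuousAt.continuousWithinAt
  have far_le (x y : ℝ) (hcx : c ≤ x) (hxy : x ≤ y) (hyd : y ≤ d)
      (hfar_xy : x ≠ y → ∀ t ∈ Icc x y, r ≤ |g t|) : ‖∫ t in x..y, F t‖ ≤ R := by
    rcases eq_or_ne x y with rfl | hne
    · simpa using hR
    · exact hfar x y hcx hxy hyd (hfar_xy hne)
  have near_le : ‖∫ t in u..v, F t‖ ≤ M * (2 * r / m) := by
    rcases eq_or_ne u v with rfl | hne
    · rw [intervalIntegral.integral_same, norm_zero]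
      positivity
    have hsub : Icc u v ⊆ Icc c d := Icc_subset_Icc hcu hvd
    calc ‖∫ t in u..v, F t‖ ≤ M * |v - u| :=
          intervalIntegral.norm_integral_le_of_norm_le_const fun t ht =>
            hM t (hsub (Ioc_subset_Icc_self (uIoc_of_le huv ▸ ht)))
      _ ≤ M * (2 * r / m) := by
          rw [abs_of_nonneg (sub_nonneg.mpr huv)]
          gcongr
          exact sub_le_of_le_abs_deriv hm (fun t ht => hg' t (hsub ht)) (hnear hne).1 (hnear hne).2
  have hintegrable (x y : ℝ) (hcx : c ≤ x) (hxy : x ≤ y) (hyd : y ≤ d) :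
      IntervalIntegrable F volume x y :=
    (hF.mono (uIcc_of_le hxy ▸ Icc_subset_Icc hcx hyd)).intervalIntegrable
  rw [← intervalIntegral.integral_add_adjacent_intervals
      (hintegrable c u le_rfl hcu (huv.trans hvd)) (hintegrable u d hcu (huv.trans hvd) le_rfl),
    ← intervalIntegral.integral_add_adjacent_intervals (hintegrable u v hcu huv hvd)
      (hintegrable v d (hcu.trans huv) hvd le_rfl)]
  refine (norm_add_le_of_le (far_le c u le_rfl hcu (huv.trans hvd) hleft)
    (norm_add_le_of_le near_le (far_le v d (hcu.trans huv) hvd le_rfl hright))).trans_eq ?_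
  ring

end Sublevel

section Balance

variable {lam δ κ M ℓ : ℝ} {N : ℕ}

lemma rpow_pow_mul_rpow_le (hN : 1 ≤ N * δ) (hlam : 1 ≤ lam) :
    (lam ^ (-(3 * δ / 2))) ^ N * lam ^ δ ≤ lam ^ (-(1 / 2) + 2 * δ) := by
  have hδ : 0 < δ := pos_of_mul_pos_right (by linarith) N.cast_nonneg
  rw [← Real.rpow_mul_natCast (by positivity), ← Real.rpow_add (by positivity)]
  exact Real.rpow_le_rpow_of_exponent_le hlam (by linarith)

lemma rpow_balance_le (hκ : 0 ≤ κ) (hM : 0 ≤ M) (hN : 1 ≤ N * δ) (hlam : 1 ≤ lam)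
    (hℓ : ℓ ≤ 2 * lam ^ δ) :
    M * (2 * lam ^ (-(1 / 2) + 3 * δ / 2) / lam ^ (-(δ / 2))) +
      2 * (M * (2 * (κ * lam ^ (-(1 / 2) - 3 * δ / 2)) *
        ∑ i ∈ Finset.range N, (κ * lam ^ (-(1 / 2) - 3 * δ / 2) * lam ^ (1 / 2 : ℝ)) ^ i +
        (κ * lam ^ (-(1 / 2) - 3 * δ / 2) * lam ^ (1 / 2 : ℝ)) ^ N * ℓ)) ≤
    2 * M * (1 + 2 * (κ * ∑ i ∈ Finset.range N, κ ^ i + κ ^ N)) * lam ^ (-(1 / 2) + 2 * δ) := by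
  have hlam0 : 0 < lam := by linarith
  have hδ : 0 < δ := pos_of_mul_pos_right (by linarith) N.cast_nonneg
  have near_eq : 2 * lam ^ (-(1 / 2) + 3 * δ / 2) / lam ^ (-(δ / 2)) =
      2 * lam ^ (-(1 / 2) + 2 * δ) := by
    rw [mul_div_assoc, ← Real.rpow_sub hlam0]
    ring_nf
  have ratio_eq : κ * lam ^ (-(1 / 2) - 3 * δ / 2) * lam ^ (1 / 2 : ℝ) =
      κ * lam ^ (-(3 * δ / 2)) := by
    rw [mul_assoc, ← Real.rpow_add hlam0]
    ring_nf
  have ratio_le : κ * lam ^ (-(3 * δ / 2)) ≤ κ :=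
    mul_le_of_le_one_right hκ (Real.rpow_le_one_of_one_le_of_nonpos hlam (by linarith))
  have boundary_le : lam ^ (-(1 / 2) - 3 * δ / 2) ≤ lam ^ (-(1 / 2) + 2 * δ) :=
    Real.rpow_le_rpow_of_exponent_le hlam (by linarith)
  have remainder_le :
      (κ * lam ^ (-(3 * δ / 2))) ^ N * ℓ ≤ κ ^ N * (2 * lam ^ (-(1 / 2) + 2 * δ)) :=
    calc (κ * lam ^ (-(3 * δ / 2))) ^ N * ℓ
        ≤ (κ * lam ^ (-(3 * δ / 2))) ^ N * (2 * lam ^ δ) := by gcongr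
      _ = κ ^ N * (2 * ((lam ^ (-(3 * δ / 2))) ^ N * lam ^ δ)) := by rw [mul_pow]; ring
      _ ≤ κ ^ N * (2 * lam ^ (-(1 / 2) + 2 * δ)) := by
          gcongr
          exact rpow_pow_mul_rpow_le hN hlam
  rw [near_eq, ratio_eq]
  generalize lam ^ (-(1 / 2) + 2 * δ) = T at *
  have hT : 0 ≤ T := (Real.rpow_nonneg hlam0.le _).trans boundary_le
  calc _
      ≤ M * (2 * T) + 2 * (M * (2 * (κ * T) * ∑ i ∈ Finset.range N, κ ^ i + κ ^ N * (2 * T))) := by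
        gcongr
    _ = 2 * M * (1 + 2 * (κ * ∑ i ∈ Finset.range N, κ ^ i + κ ^ N)) * T := by ring

end Balance

section OscillatoryIntegral

variable {E : Type*} [NormedAddCommGroup E] [NormedSpace ℂ E]
  {lam X A K M m r c d : ℝ} {k : ℕ} {φ : ℝ → ℝ} {f v : ℝ → E} {t : ℝ}

/-- The oscillating factor `e^{iλφ(t)}` of an oscillatory integral, complex-valued so that it can
multiply amplitudes in any complex normed space. -/
noncomputable def oscillatingFactor (lam : ℝ) (φ : ℝ → ℝ) (t : ℝ) : ℂ :=
  Complex.exp (Complex.I * lam * φ t)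

lemma norm_oscillatingFactor : ‖oscillatingFactor lam φ t‖ = 1 := by
  simpa [oscillatingFactor, mul_assoc] using Complex.norm_exp_I_mul_ofReal (lam * φ t)

lemma norm_oscillatingFactor_smul (x : E) : ‖oscillatingFactor lam φ t • x‖ = ‖x‖ := by
  rw [norm_smul, norm_oscillatingFactor, one_mul]

lemma hasDerivAt_oscillatingFactor (hφ : DifferentiableAt ℝ φ t) :
    HasDerivAt (oscillatingFactor lam φ)
      (oscillatingFactor lam φ t * (Complex.I * lam * deriv φ t)) t :=
  (hφ.hasDerivAt.ofReal_comp.const_mul (Complex.I * lam)).cexp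

lemma norm_integral_oscillatingFactor_smul_le (hcd : c ≤ d) (hf : ∀ t ∈ Icc c d, ‖f t‖ ≤ M) :
    ‖∫ t in c..d, oscillatingFactor lam φ t • f t‖ ≤ M * (d - c) := by
  rw [← abs_of_nonneg (sub_nonneg.mpr hcd)]
  refine intervalIntegral.norm_integral_le_of_norm_le_const fun t ht => ?_
  rw [uIoc_of_le hcd] at ht
  exact (norm_oscillatingFactor_smul _).trans_le (hf t (Ioc_subset_Icc_self ht))

lemma integral_oscillatingFactor_smul_deriv_smul [CompleteSpace E]
    (hφ : ∀ t ∈ uIcc c d, ContDiffAt ℝ 1 φ t) (hv : ∀ t ∈ uIcc c d, ContDiffAt ℝ 1 v t) :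
    (Complex.I * lam) • ∫ t in c..d, oscillatingFactor lam φ t • deriv φ t • v t =
      oscillatingFactor lam φ d • v d - oscillatingFactor lam φ c • v c
        - ∫ t in c..d, oscillatingFactor lam φ t • deriv v t := by
  have continuousOn_deriv : ContinuousOn (deriv φ) (uIcc c d) := fun t ht =>
    ((hφ t ht).derivWithin (m := 0) le_rfl).continuousAt.continuousWithinAt
  have continuousOn_deriv_v : ContinuousOn (deriv v) (uIcc c d) := fun t ht =>
    ((hv t ht).derivWithin (m := 0) le_rfl).continuousAt.continuousWithinAt
  have hasDerivAt_factor (t : ℝ) (ht : t ∈ uIcc c d) := hasDerivAt_oscillatingFactor (lam := lam)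
    ((hφ t ht).differentiableAt one_ne_zero)
  have continuousOn_factor : ContinuousOn (oscillatingFactor lam φ) (uIcc c d) := fun t ht =>
    (hasDerivAt_factor t ht).continuousAt.continuousWithinAt
  have by_parts := intervalIntegral.integral_smul_deriv_eq_deriv_smul hasDerivAt_factor
    (fun t ht => ((hv t ht).differentiableAt one_ne_zero).hasDerivAt)
    (ContinuousOn.intervalIntegrable (by fun_prop)) continuousOn_deriv_v.intervalIntegrable
  have smul_integral_eq :
      (Complex.I * lam) • ∫ t in c..d, oscillatingFactor lam φ t • deriv φ t • v t =
      ∫ t in c..d, (oscillatingFactor lam φ t * (Complex.I * lam * deriv φ t)) • v t := by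
    rw [← intervalIntegral.integral_smul]
    refine intervalIntegral.integral_congr fun t _ => ?_
    simp only [← Complex.coe_smul, smul_smul]
    congr 1
    ring
  rw [smul_integral_eq, by_parts, sub_sub_cancel]

lemma norm_integral_oscillatingFactor_smul_le_geom_sum [CompleteSpace E] (hlam : 0 < lam)
    (hX : 0 ≤ X) (hcd : c ≤ d) (hφ : ∀ t ∈ Icc c d, ContDiffAt ℝ 1 φ t)
    (hφ0 : ∀ t ∈ Icc c d, deriv φ t ≠ 0)
    (hinv : ∀ t ∈ Icc c d, SymbolBoundAt X A k (deriv φ)⁻¹ t)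
    (hf : ∀ t ∈ Icc c d, SymbolBoundAt X M k f t) (hK : 2 ^ k * A ≤ K * lam) :
    ‖∫ t in c..d, oscillatingFactor lam φ t • f t‖
      ≤ M * (2 * K * ∑ i ∈ Finset.range k, (K * X) ^ i + (K * X) ^ k * (d - c)) := by
  induction k generalizing f M with
  | zero =>
    simpa using norm_integral_oscillatingFactor_smul_le hcd fun t ht => (hf t ht).norm_le
  | succ k ih =>
    have hM : 0 ≤ M := (hf c (left_mem_Icc.mpr hcd)).nonneg
    have hA : 0 ≤ A := (hinv c (left_mem_Icc.mpr hcd)).nonneg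
    have hv (t : ℝ) (ht : t ∈ Icc c d) :
        SymbolBoundAt X (K * lam * M) (k + 1) ((deriv φ)⁻¹ • f) t :=
      ((hinv t ht).smul (hf t ht)).mono_size hX (by rw [← mul_assoc]; gcongr)
    have hboundary (t : ℝ) (ht : t ∈ Icc c d) :
        ‖oscillatingFactor lam φ t • ((deriv φ)⁻¹ • f) t‖ ≤ K * lam * M :=
      (norm_oscillatingFactor_smul _).trans_le (hv t ht).norm_le
    have hremainder := ih (fun t ht => (hinv t ht).of_le k.le_succ) (fun t ht => (hv t ht).deriv)
      (le_trans (by gcongr <;> simp) hK)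
    have by_parts := integral_oscillatingFactor_smul_deriv_smul (lam := lam) (c := c) (d := d)
      (φ := φ) (v := (deriv φ)⁻¹ • f) (by rwa [uIcc_of_le hcd])
      (by rw [uIcc_of_le hcd]; exact fun t ht => (hv t ht).contDiffAt.of_le (mod_cast k.succ_pos))
    have integral_eq : ∫ t in c..d, oscillatingFactor lam φ t • f t =
        ∫ t in c..d, oscillatingFactor lam φ t • deriv φ t • ((deriv φ)⁻¹ • f) t := by
      refine intervalIntegral.integral_congr fun t ht => ?_
      rw [uIcc_of_le hcd] at ht
      simp [smul_inv_smul₀ (hφ0 t ht)]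
    have norm_smul_integral : lam * ‖∫ t in c..d, oscillatingFactor lam φ t • f t‖ =
        ‖(Complex.I * lam) • ∫ t in c..d, oscillatingFactor lam φ t • f t‖ := by
      simp [norm_smul, abs_of_pos hlam]
    refine le_of_mul_le_mul_left ?_ hlam
    calc lam * ‖∫ t in c..d, oscillatingFactor lam φ t • f t‖
        ≤ K * lam * M + K * lam * M + K * lam * M * X *
            (2 * K * ∑ i ∈ Finset.range k, (K * X) ^ i + (K * X) ^ k * (d - c)) := by
          rw [norm_smul_integral, integral_eq, by_parts]
          exact norm_sub_le_of_le (norm_sub_le_of_le (hboundary d (right_mem_Icc.mpr hcd))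
            (hboundary c (left_mem_Icc.mpr hcd))) hremainder
      _ = lam * (M * (2 * K * ∑ i ∈ Finset.range (k + 1), (K * X) ^ i
            + (K * X) ^ (k + 1) * (d - c))) := by
          rw [geom_sum_succ]
          ring

lemma norm_integral_oscillatingFactor_smul_le_of_le_abs_deriv [CompleteSpace E] (hlam : 0 < lam)
    (hX : 0 ≤ X) (hr : 0 < r) (hcd : c ≤ d) (hφ : ∀ t ∈ Icc c d, ContDiffAt ℝ (k + 1) φ t)
    (hrφ : ∀ t ∈ Icc c d, r ≤ |deriv φ t|)
    (hφX : ∀ t ∈ Icc c d, ∀ j ≤ k, j ≠ 0 → |iteratedDeriv j (deriv φ) t| ≤ r * X ^ j)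
    (hf : ∀ t ∈ Icc c d, SymbolBoundAt X M k f t) (hK : k.factorial * 4 ^ k = K * (lam * r)) :
    ‖∫ t in c..d, oscillatingFactor lam φ t • f t‖
      ≤ M * (2 * K * ∑ i ∈ Finset.range k, (K * X) ^ i + (K * X) ^ k * (d - c)) := by
  refine norm_integral_oscillatingFactor_smul_le_geom_sum (A := k.factorial * 2 ^ k * r⁻¹)
    hlam hX hcd (fun t ht => (hφ t ht).of_le (by simp))
    (fun t ht => abs_pos.mp (hr.trans_le (hrφ t ht)))
    (fun t ht => SymbolBoundAt.inv_of_le_norm hX hr (hrφ t ht) ((hφ t ht).derivWithin le_rfl)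
      (hφX t ht)) hf (le_of_eq ?_)
  have four_pow : (4 : ℝ) ^ k = 2 ^ k * 2 ^ k := by rw [← mul_pow]; norm_num
  rw [four_pow] at hK
  field_simp
  linarith

lemma norm_integral_oscillatingFactor_smul_le_of_le_abs_deriv_deriv [CompleteSpace E]
    (hlam : 0 < lam) (hX : 0 ≤ X) (hr : 0 < r) (hm : 0 < m) (hcd : c ≤ d)
    (hφ : ∀ t ∈ Icc c d, ContDiffAt ℝ (k + 1) φ t)
    (hφ'' : ∀ t ∈ Icc c d, m ≤ |deriv (deriv φ) t|)
    (hφX : ∀ t ∈ Icc c d, ∀ j ≤ k, j ≠ 0 → |iteratedDeriv j (deriv φ) t| ≤ r * X ^ j)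
    (hf : ∀ t ∈ Icc c d, SymbolBoundAt X M k f t) (hK : k.factorial * 4 ^ k = K * (lam * r)) :
    ‖∫ t in c..d, oscillatingFactor lam φ t • f t‖ ≤ M * (2 * r / m) +
      2 * (M * (2 * K * ∑ i ∈ Finset.range k, (K * X) ^ i + (K * X) ^ k * (d - c))) := by
  have hM : 0 ≤ M := (hf c (left_mem_Icc.mpr hcd)).nonneg
  have hK0 : 0 ≤ K := nonneg_of_mul_nonneg_left (hK ▸ by positivity) (mul_pos hlam hr)
  have hR : 0 ≤ M * (2 * K * ∑ i ∈ Finset.range k, (K * X) ^ i + (K * X) ^ k * (d - c)) := by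
    have := sub_nonneg.mpr hcd
    positivity
  have hcont : ContinuousOn (fun t => oscillatingFactor lam φ t • f t) (Icc c d) := fun t ht =>
    ((hasDerivAt_oscillatingFactor ((hφ t ht).differentiableAt (by simp))).continuousAt.smul
      (hf t ht).contDiffAt.continuousAt).continuousWithinAt
  refine norm_integral_le_of_le_abs_deriv hcd hm hr.le hR hcont hφ''
    (fun t ht => (norm_oscillatingFactor_smul _).trans_le (hf t ht).norm_le)
    fun x y hx hxy hy hfar => ?_
  have hsub : Icc x y ⊆ Icc c d := Icc_subset_Icc hx hy
  refine (norm_integral_oscillatingFactor_smul_le_of_le_abs_deriv hlam hX hr hxy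
    (fun t ht => hφ t (hsub ht)) hfar (fun t ht => hφX t (hsub ht))
    (fun t ht => hf t (hsub ht)) hK).trans ?_
  gcongr

lemma norm_integral_oscillatingFactor_smul_le_rpow [CompleteSpace E] {δ : ℝ} {N : ℕ}
    (hN : 1 ≤ N * δ) (hlam : 1 ≤ lam) (hcd : c ≤ d)
    (hφ : ∀ t ∈ Icc c d, ContDiffAt ℝ (N + 1) φ t)
    (hφ'' : ∀ t ∈ Icc c d, lam ^ (-(δ / 2)) ≤ |deriv (deriv φ) t|)
    (hφ' : ∀ t ∈ Icc c d, ∀ j ≤ N, |iteratedDeriv j (deriv φ) t| ≤ lam ^ (δ / 2))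
    (hf : ∀ t ∈ Icc c d, SymbolBoundAt (lam ^ (1 / 2 : ℝ)) M N f t) :
    ‖∫ t in c..d, oscillatingFactor lam φ t • f t‖ ≤ 2 * M * (1 + 2 * (N.factorial * 4 ^ N *
        ∑ i ∈ Finset.range N, (N.factorial * 4 ^ N : ℝ) ^ i + (N.factorial * 4 ^ N) ^ N)) *
      lam ^ (-(1 / 2) + 2 * δ) := by
  have hlam0 : 0 < lam := by linarith
  have hδ : 0 < δ := pos_of_mul_pos_right (by linarith) N.cast_nonneg
  have hM : 0 ≤ M := (hf c (left_mem_Icc.mpr hcd)).nonneg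
  have hlen : d - c ≤ 2 * lam ^ δ := by
    refine (sub_le_of_le_abs_deriv (Real.rpow_pos_of_pos hlam0 _) hφ''
      (hφ' c (left_mem_Icc.mpr hcd) 0 N.zero_le)
      (hφ' d (right_mem_Icc.mpr hcd) 0 N.zero_le)).trans_eq ?_
    rw [mul_div_assoc, ← Real.rpow_sub hlam0]
    ring_nf
  have hφX (t : ℝ) (ht : t ∈ Icc c d) (j : ℕ) (hj : j ≤ N) (hj0 : j ≠ 0) :
      |iteratedDeriv j (deriv φ) t| ≤
        lam ^ (-(1 / 2) + 3 * δ / 2) * (lam ^ (1 / 2 : ℝ)) ^ j := by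
    have hj1 : (1 : ℝ) ≤ j := mod_cast Nat.one_le_iff_ne_zero.mpr hj0
    rw [← Real.rpow_mul_natCast hlam0.le, ← Real.rpow_add hlam0]
    exact (hφ' t ht j hj).trans (Real.rpow_le_rpow_of_exponent_le hlam (by linarith))
  refine (norm_integral_oscillatingFactor_smul_le_of_le_abs_deriv_deriv
    (K := N.factorial * 4 ^ N * lam ^ (-(1 / 2) - 3 * δ / 2)) hlam0
    (Real.rpow_nonneg hlam0.le _) (Real.rpow_pos_of_pos hlam0 _) (Real.rpow_pos_of_pos hlam0 _)
    hcd hφ hφ'' hφX hf ?_).trans (rpow_balance_le (by positivity) hM hN hlam hlen)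
  rw [← Real.rpow_one_add' hlam0.le (by linarith), mul_assoc, ← Real.rpow_add hlam0]
  ring_nf
  simp

end OscillatoryIntegral

lemma norm_setIntegral_Ioo_le {E : Type*} [NormedAddCommGroup E] [NormedSpace ℝ E] {f : ℝ → E}
    {p q B : ℝ} (hB : 0 ≤ B)
    (h : ∀ c d, c ≤ d → Icc c d ⊆ Ioo p q → ‖∫ t in c..d, f t‖ ≤ B) :
    ‖∫ t in Ioo p q, f t‖ ≤ B := by
  rcases le_or_gt q p with hqp | hpq
  · simpa [Ioo_eq_empty hqp.not_gt] using hB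
  by_cases hf : IntegrableOn f (Ioo p q)
  swap
  · simpa [integral_undef hf] using hB
  obtain ⟨s, hpsq, hmem⟩ := exists_between hpq
  obtain ⟨u, -, hu, hup⟩ := exists_seq_strictAnti_tendsto' hpsq
  obtain ⟨v, -, hv, hvq⟩ := exists_seq_strictMono_tendsto' hmem
  have hlim := (aecover_Ioo_of_Icc (μ := volume) hup hvq).integral_tendsto_of_countably_generated hf
  refine le_of_tendsto hlim.norm (Eventually.of_forall fun n => ?_)
  have huv : u n ≤ v n := (hu n).2.le.trans (hv n).1.le
  have hsub : Icc (u n) (v n) ⊆ Ioo p q := Icc_subset_Ioo (hu n).1 (hv n).2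
  rw [Measure.restrict_restrict_of_subset hsub, integral_Icc_eq_integral_Ioc,
    ← intervalIntegral.integral_of_le huv]
  exact h _ _ huv hsub

lemma setIntegral_mul_eq_integral_of_tsupport_subset {α R : Type*} [TopologicalSpace α]
    [MeasurableSpace α] {μ : Measure α} [NormedRing R] [NormedSpace ℝ R] {f g : α → R} {s : Set α}
    (hg : tsupport g ⊆ s) : ∫ t in s, f t * g t ∂μ = ∫ t, f t * g t ∂μ :=
  setIntegral_eq_integral_of_forall_compl_eq_zero fun t ht => by
    rw [image_eq_zero_of_notMem_tsupport fun h => ht (hg h), mul_zero]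

lemma one_le_natCeil_four_div_mul {δ : ℝ} (hδ : 0 < δ) : 1 ≤ (⌈4 / δ⌉₊ : ℝ) * δ := by
  have four_le : 4 ≤ (⌈4 / δ⌉₊ : ℝ) * δ := (div_le_iff₀ hδ).mp (Nat.le_ceil _)
  linarith

theorem stationary_phase_combined_bound_general {E : Type*} [NormedAddCommGroup E]
    [NormedSpace ℂ E] [CompleteSpace E] {δ : ℝ} {N : ℕ} (hN : 1 ≤ N * δ) (Cj : ℕ → ℝ) :
    ∃ C : ℝ, ∀ lam : ℝ, 1 ≤ lam →
      ∀ (φ : ℝ → ℝ) (a : ℝ → E) (p q : ℝ),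
        ContDiffOn ℝ (N + 1) φ (Ioo p q) →
        ContDiffOn ℝ N a (Ioo p q) →
        (∀ t ∈ Ioo p q, lam ^ (-(δ / 2)) ≤ |deriv (deriv φ) t|) →
        (∀ j ≤ N, ∀ t ∈ Ioo p q, ‖iteratedDeriv j a t‖ ≤ Cj j * lam ^ ((j : ℝ) / 2)) →
        (∀ j ≤ N, ∀ t ∈ Ioo p q, |iteratedDeriv j (deriv φ) t| ≤ lam ^ (δ / 2)) →
        ‖∫ t in Ioo p q, Complex.exp (Complex.I * lam * φ t) • a t‖
          ≤ C * lam ^ (-(1 / 2) + 2 * δ) := by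
  set M : ℝ := ∑ j ∈ Finset.range (N + 1), |Cj j|
  have Cj_le_M (j : ℕ) (hj : j ≤ N) : Cj j ≤ M :=
    (le_abs_self _).trans (Finset.single_le_sum (f := fun j => |Cj j|)
      (fun _ _ => abs_nonneg _) (Finset.mem_range_succ_iff.mpr hj))
  have hM0 : 0 ≤ M := Finset.sum_nonneg fun _ _ => abs_nonneg _
  refine ⟨_, fun lam hlam φ a p q hφ ha hφ'' haj hφj =>
    norm_setIntegral_Ioo_le (by positivity) fun c d hcd hsub =>
      norm_integral_oscillatingFactor_smul_le_rpow (M := M) hN hlam hcd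
        (fun t ht => hφ.contDiffAt (Ioo_mem_nhds (hsub ht).1 (hsub ht).2))
        (fun t ht => hφ'' t (hsub ht)) (fun t ht j hj => hφj j hj t (hsub ht))
        fun t ht => ⟨ha.contDiffAt (Ioo_mem_nhds (hsub ht).1 (hsub ht).2), fun j hj => ?_⟩⟩
  rw [← Real.rpow_mul_natCast (by positivity), one_div_mul_eq_div]
  exact (haj j hj t (hsub ht)).trans (by gcongr; exact Cj_le_M j hj)

/-- **Combined stationary phase estimate** (Proposition 4.3 of Sogge–Xi–Zhang).
Suppose `φ ∈ C^∞(ℝ)` is real valued, `a ∈ C_0^∞(ℐ)` for an open interval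
`ℐ = (p,q) ⊂ (-1/2,1/2)`, `0 < δ < 1/2`, `λ^{-δ/2} ≤ |φ''|` on `ℐ`, and for
`0 ≤ j ≤ ⌈4/δ⌉` one has `|∂_t^j a| ≤ C_j λ^{j/2}` and `|∂_t^j φ'| ≤ λ^{δ/2}`
on `ℐ`.  Then `|∫ e^{iλφ(t)} a(t) dt| ≤ C λ^{-1/2+2δ}` with `C` depending only on
`δ` and the constants `C_j`. -/
theorem stationary_phase_combined_bound
    (δ : ℝ) (hδ0 : 0 < δ) (hδ1 : δ < 1 / 2) (Cj : ℕ → ℝ) :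
    ∃ C : ℝ, ∀ lam : ℝ, 1 ≤ lam →
      ∀ (φ : ℝ → ℝ) (a : ℝ → ℂ) (p q : ℝ),
        Set.Ioo p q ⊆ Set.Ioo (-(1 / 2) : ℝ) (1 / 2) →
        ContDiff ℝ (⊤ : ℕ∞) φ →
        ContDiff ℝ (⊤ : ℕ∞) a →
        tsupport a ⊆ Set.Ioo p q →
        (∀ t ∈ Set.Ioo p q, lam ^ (-(δ / 2) : ℝ) ≤ |deriv (deriv φ) t|) →
        (∀ j : ℕ, j ≤ ⌈4 / δ⌉₊ → ∀ t ∈ Set.Ioo p q,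
          ‖iteratedDeriv j a t‖ ≤ Cj j * lam ^ ((j : ℝ) / 2)) →
        (∀ j : ℕ, j ≤ ⌈4 / δ⌉₊ → ∀ t ∈ Set.Ioo p q,
          |iteratedDeriv j (deriv φ) t| ≤ lam ^ (δ / 2 : ℝ)) →
        ‖∫ t : ℝ, Complex.exp (Complex.I * lam * φ t) * a t‖
          ≤ C * lam ^ (-(1 / 2) + 2 * δ : ℝ) := by
  obtain ⟨C, hC⟩ := stationary_phase_combined_bound_general (E := ℂ)
    (one_le_natCeil_four_div_mul hδ0) Cj
  refine ⟨C, fun lam hlam φ a p q _ hφ ha hsupp hφ'' haj hφj => ?_⟩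
  rw [← setIntegral_mul_eq_integral_of_tsupport_subset hsupp]
  exact hC lam hlam φ a p q (hφ.contDiffOn.of_le (by exact_mod_cast le_top))
    (ha.contDiffOn.of_le (by exact_mod_cast le_top)) hφ'' haj hφj
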